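/- Let V = V_1 ∪ V_2 ∪ V_3 be a partition into pairwise disjoint sets with V_1, V_2 nonempty that achieves the dual Cheeger constant, i.e. h̄ = 2|E(V_1,V_2)|/(vol(V_1)+vol(V_2)). If vol(V_1 ∪ V_2) ≤ vol(V_3), then λ_{N−1} ≥ 2·h̄ + R(V_1,V_2)·h, where R(V_1,V_2) := min(vol(V_1), vol(V_2))/max(vol(V_1), vol(V_2)). -/

import Mathlib

open Finset

noncomputable section

namespace BJ

variable {V : Type*} [Fintype V] [DecidableEq V]

/-- The degree `d_i = ∑_j w_ij` of a vertex. -/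
def deg (w : V → V → ℝ) (i : V) : ℝ := ∑ j, w i j

/-- The volume `vol(A) = ∑_{i ∈ A} d_i` of a vertex subset. -/
def vol (w : V → V → ℝ) (A : Finset V) : ℝ := ∑ i ∈ A, deg w i

/-- The total edge weight `|E(A,B)| = ∑_{i ∈ A, j ∈ B} w_ij` between two vertex subsets. -/
def eW (w : V → V → ℝ) (A B : Finset V) : ℝ := ∑ i ∈ A, ∑ j ∈ B, w i j

/-- The normalized graph Laplacian `(Δu)(i) = u(i) - (1/d_i) ∑_j w_ij u(j)`. -/
def lap (w : V → V → ℝ) (u : V → ℝ) (i : V) : ℝ :=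
  u i - (1 / deg w i) * ∑ j, w i j * u j

/-- `lam` is an eigenvalue of the normalized graph Laplacian. -/
def IsEigen (w : V → V → ℝ) (lam : ℝ) : Prop :=
  ∃ u : V → ℝ, u ≠ 0 ∧ ∀ i, lap w u i = lam * u i

/-- The weighted graph is connected: any two vertices are joined by a chain of
positive-weight edges. -/
def Conn (w : V → V → ℝ) : Prop :=
  ∀ i j : V, Relation.ReflTransGen (fun a b => 0 < w a b) i j

/-- The weighted graph is bipartite: the vertex set splits into two nonempty classes with
no edges inside a class. -/
def Bipartite (w : V → V → ℝ) : Prop :=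
  ∃ A : Finset V, A.Nonempty ∧ Aᶜ.Nonempty ∧
    (∀ i ∈ A, ∀ j ∈ A, w i j = 0) ∧ (∀ i ∈ Aᶜ, ∀ j ∈ Aᶜ, w i j = 0)

/-- The Cheeger constant
`h = min { |E(U,Uᶜ)| / vol(U) : ∅ ≠ U ⊊ V, vol(U) ≤ vol(V)/2 }`. -/
def cheeger (w : V → V → ℝ) : ℝ :=
  sInf { r : ℝ | ∃ U : Finset V, U.Nonempty ∧ U ≠ Finset.univ ∧
    vol w U ≤ vol w Finset.univ / 2 ∧ r = eW w U Uᶜ / vol w U }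

/-- The dual Cheeger constant
`h̄ = max { 2|E(V₁,V₂)| / (vol(V₁)+vol(V₂)) }` over pairs of disjoint nonempty vertex sets
`V₁, V₂` (the third class `V₃` of the partition being the complement of `V₁ ∪ V₂`). -/
def dualCheeger (w : V → V → ℝ) : ℝ :=
  sSup { r : ℝ | ∃ V1 V2 : Finset V, V1.Nonempty ∧ V2.Nonempty ∧ Disjoint V1 V2 ∧
    r = 2 * eW w V1 V2 / (vol w V1 + vol w V2) }

/-- The weights of the neighborhood graph `Γ[l]`:
`w_ij[l] = ∑_{k₁,…,k_{l-1}} w_{i k₁} w_{k₁ k₂} ⋯ w_{k_{l-1} j} / (d_{k₁} ⋯ d_{k_{l-1}})`,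
defined recursively (as a matrix, `wl w l = D ⬝ P^l`; in particular `wl w 1 = w`). -/
def wl (w : V → V → ℝ) : ℕ → V → V → ℝ
  | 0 => fun i j => if i = j then deg w i else 0
  | n + 1 => fun i j => ∑ k, wl w n i k * w k j / deg w k

/-!
Test the Rayleigh quotient of `Δ` on the function `u` equal to `1` on `V₁`, `-1` on `V₂` and `0`
elsewhere. With `U = V₁ ∪ V₂`, every edge between `V₁` and `V₂` contributes `(1 - (-1))² = 4` to the
energy and every edge leaving `U` contributes `1`, so that
`λ_{N-1} ≥ (4 |E(V₁,V₂)| + |E(U,Uᶜ)|) / vol(U)`. When `vol(U) ≤ vol(Uᶜ)` the set `U` is admissible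
for the Cheeger constant, so `|E(U,Uᶜ)| / vol(U) ≥ h ≥ R(V₁,V₂) h`.
-/

section Rayleigh

open Matrix Module.End

theorem exists_hasEigenvalue_forall_dotProduct_mulVec_le {n : Type*} [Fintype n] [DecidableEq n]
    [Nonempty n] {A : Matrix n n ℝ} (hA : A.IsHermitian) :
    ∃ μ, HasEigenvalue (toLin' A) μ ∧ ∀ x, x ⬝ᵥ A *ᵥ x ≤ μ * (x ⬝ᵥ x) := by
  obtain ⟨k, hk⟩ := Finite.exists_max hA.eigenvalues
  refine ⟨hA.eigenvalues k, ?_, fun x => ?_⟩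
  · rw [hasEigenvalue_iff_mem_spectrum, spectrum_toLin']
    exact hA.eigenvalues_mem_spectrum_real k
  · have hpsd : (algebraMap ℝ (Matrix n n ℝ) (hA.eigenvalues k) - A).PosSemidef := by
      rw [posSemidef_iff_isHermitian_and_spectrum_nonneg]
      refine ⟨(IsSelfAdjoint.algebraMap _ (.all _)).sub hA, ?_⟩
      rw [← spectrum.singleton_sub_eq, hA.spectrum_real_eq_range_eigenvalues]
      rintro _ ⟨_, rfl, _, ⟨j, rfl⟩, rfl⟩
      exact sub_nonneg.2 (hk j)
    have h := hpsd.dotProduct_mulVec_nonneg x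
    rw [star_trivial, Algebra.algebraMap_eq_smul_one, sub_mulVec, smul_mulVec, one_mulVec,
      dotProduct_sub, dotProduct_smul, smul_eq_mul] at h
    exact sub_nonneg.1 h

/-- The symmetric normalized Laplacian `1 - D^{-1/2} W D^{-1/2}`, where `D` is the diagonal matrix
of degrees. Conjugation by `D^{1/2}` turns it into `Δ`, which brings the spectral theorem for
Hermitian matrices to bear on `Δ`. -/
def symLap (w : V → V → ℝ) : Matrix V V ℝ :=
  1 - of fun i j => w i j / (√(deg w i) * √(deg w j))

theorem isHermitian_symLap {w : V → V → ℝ} (hsym : ∀ i j, w i j = w j i) :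
    (symLap w).IsHermitian := by
  refine isHermitian_one.sub (IsHermitian.ext fun i j => ?_)
  simp only [of_apply, star_trivial, hsym j i, mul_comm]

theorem symLap_mulVec_sqrt_deg_mul {w : V → V → ℝ} (hdeg : ∀ i, 0 < deg w i) (u : V → ℝ) :
    symLap w *ᵥ (fun i => √(deg w i) * u i) = fun i => √(deg w i) * lap w u i := by
  have hentry : ∀ i j, w i j / (√(deg w i) * √(deg w j)) * (√(deg w j) * u j) =
      √(deg w i) * (1 / deg w i * (w i j * u j)) := fun i j => by
    have hj : √(deg w j) ≠ 0 := (Real.sqrt_pos.2 (hdeg j)).ne'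
    calc w i j / (√(deg w i) * √(deg w j)) * (√(deg w j) * u j)
        = 1 / √(deg w i) * (w i j * u j) := by field_simp
      _ = √(deg w i) * (1 / deg w i * (w i j * u j)) := by rw [← Real.sqrt_div_self']; ring
  ext i
  rw [symLap, sub_mulVec, one_mulVec, Pi.sub_apply, lap, mul_sub]
  simp only [mulVec, dotProduct, of_apply, hentry, Finset.mul_sum]

theorem isEigen_of_hasEigenvalue_symLap {w : V → V → ℝ} (hdeg : ∀ i, 0 < deg w i) {μ : ℝ}
    (hμ : HasEigenvalue (toLin' (symLap w)) μ) : IsEigen w μ := by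
  have hsqrt : ∀ i, √(deg w i) ≠ 0 := fun i => (Real.sqrt_pos.2 (hdeg i)).ne'
  obtain ⟨v, hv⟩ := hμ.exists_hasEigenvector
  obtain ⟨u, rfl⟩ : ∃ u : V → ℝ, v = fun i => √(deg w i) * u i :=
    ⟨fun i => v i / √(deg w i), funext fun i => (mul_div_cancel₀ _ (hsqrt i)).symm⟩
  have heq := hv.apply_eq_smul
  rw [toLin'_apply, symLap_mulVec_sqrt_deg_mul hdeg] at heq
  refine ⟨u, ?_, fun i => mul_left_cancel₀ (hsqrt i) ?_⟩
  · rintro rfl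
    exact hv.2 (by ext; simp)
  · simpa [mul_left_comm] using congrFun heq i

omit [DecidableEq V] in
theorem deg_mul_lap {w : V → V → ℝ} {i : V} (hdeg : deg w i ≠ 0) (u : V → ℝ) :
    deg w i * lap w u i = ∑ j, w i j * (u i - u j) := by
  rw [lap, mul_sub, one_div, mul_inv_cancel_left₀ hdeg, deg, Finset.sum_mul,
    ← Finset.sum_sub_distrib]
  simp only [mul_sub]

/-- The Dirichlet energy `½ ∑_{i,j} w_ij (u(i) - u(j))²`, i.e. the quadratic form of `Δ` for the
inner product on `V → ℝ` weighted by the degrees. -/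
def dirichletEnergy (w : V → V → ℝ) (u : V → ℝ) : ℝ := (∑ i, ∑ j, w i j * (u i - u j) ^ 2) / 2

omit [DecidableEq V] in
theorem sum_deg_mul_mul_lap {w : V → V → ℝ} (hsym : ∀ i j, w i j = w j i)
    (hdeg : ∀ i, deg w i ≠ 0) (u : V → ℝ) :
    ∑ i, deg w i * (u i * lap w u i) = dirichletEnergy w u := by
  have hlap : ∑ i, deg w i * (u i * lap w u i) = ∑ i, ∑ j, w i j * (u i * (u i - u j)) :=
    Finset.sum_congr rfl fun i _ => by
      rw [mul_left_comm, deg_mul_lap (hdeg i), Finset.mul_sum]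
      simp only [mul_left_comm]
  have hswap : ∑ i, ∑ j, w i j * (u i * (u i - u j)) = ∑ i, ∑ j, w i j * (u j * (u j - u i)) := by
    rw [Finset.sum_comm]
    simp only [hsym]
  rw [dirichletEnergy, eq_div_iff two_ne_zero, mul_two, hlap]
  nth_rw 2 [hswap]
  simp only [← Finset.sum_add_distrib]
  exact Finset.sum_congr rfl fun i _ => Finset.sum_congr rfl fun j _ => by ring

omit [DecidableEq V] in
theorem exists_isEigen_forall_dirichletEnergy_le [Nonempty V] {w : V → V → ℝ}
    (hsym : ∀ i j, w i j = w j i) (hdeg : ∀ i, 0 < deg w i) :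
    ∃ μ, IsEigen w μ ∧ ∀ u, dirichletEnergy w u ≤ μ * ∑ i, deg w i * u i ^ 2 := by
  classical
  obtain ⟨μ, hμ, hle⟩ := exists_hasEigenvalue_forall_dotProduct_mulVec_le (isHermitian_symLap hsym)
  refine ⟨μ, isEigen_of_hasEigenvalue_symLap hdeg hμ, fun u => ?_⟩
  have hdot : ∀ f : V → ℝ, (fun i => √(deg w i) * u i) ⬝ᵥ (fun i => √(deg w i) * f i) =
      ∑ i, deg w i * (u i * f i) := fun f =>
    Finset.sum_congr rfl fun i _ => by rw [mul_mul_mul_comm, Real.mul_self_sqrt (hdeg i).le]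
  have hu := hle fun i => √(deg w i) * u i
  rw [symLap_mulVec_sqrt_deg_mul hdeg, hdot, hdot,
    sum_deg_mul_mul_lap hsym fun i => (hdeg i).ne'] at hu
  simpa only [sq] using hu

end Rayleigh

section EdgeWeights

omit [DecidableEq V] in
theorem vol_pos {w : V → V → ℝ} (hdeg : ∀ i, 0 < deg w i) {A : Finset V} (hA : A.Nonempty) :
    0 < vol w A :=
  Finset.sum_pos (fun i _ => hdeg i) hA

omit [DecidableEq V] in
theorem vol_nonneg {w : V → V → ℝ} (hnn : ∀ i j, 0 ≤ w i j) (A : Finset V) : 0 ≤ vol w A :=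
  Finset.sum_nonneg fun i _ => Finset.sum_nonneg fun j _ => hnn i j

theorem vol_union {w : V → V → ℝ} {A B : Finset V} (hAB : Disjoint A B) :
    vol w (A ∪ B) = vol w A + vol w B :=
  Finset.sum_union hAB

theorem vol_add_vol_compl (w : V → V → ℝ) (A : Finset V) :
    vol w A + vol w Aᶜ = vol w univ :=
  Finset.sum_add_sum_compl A _

omit [Fintype V] [DecidableEq V] in
theorem eW_nonneg {w : V → V → ℝ} (hnn : ∀ i j, 0 ≤ w i j) (A B : Finset V) : 0 ≤ eW w A B :=
  Finset.sum_nonneg fun i _ => Finset.sum_nonneg fun j _ => hnn i j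

omit [Fintype V] [DecidableEq V] in
theorem eW_comm {w : V → V → ℝ} (hsym : ∀ i j, w i j = w j i) (A B : Finset V) :
    eW w A B = eW w B A := by
  rw [eW, Finset.sum_comm]
  simp only [eW, hsym]

theorem eW_eq_sum_ite (w : V → V → ℝ) (A B : Finset V) :
    eW w A B = ∑ i, ∑ j, if i ∈ A ∧ j ∈ B then w i j else 0 := by
  simp [eW, ite_and, Finset.sum_ite_mem]

end EdgeWeights

section CutFunction

/-- The test function of the pair `(A, B)`: `1` on `A`, `-1` on `B` and `0` elsewhere. It is meant
for disjoint sets; on `A ∩ B` the value is `1`. -/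
def cutFun (A B : Finset V) (i : V) : ℝ := if i ∈ A then 1 else if i ∈ B then -1 else 0

theorem sum_deg_mul_cutFun_sq (w : V → V → ℝ) (A B : Finset V) :
    ∑ i, deg w i * cutFun A B i ^ 2 = vol w (A ∪ B) := by
  have hsq : ∀ i, deg w i * cutFun A B i ^ 2 = if i ∈ A ∪ B then deg w i else 0 := fun i => by
    simp only [cutFun, Finset.mem_union]
    split_ifs <;> simp_all
  simp only [hsq, Finset.sum_ite_mem, Finset.univ_inter, vol]

theorem dirichletEnergy_cutFun {w : V → V → ℝ} (hsym : ∀ i j, w i j = w j i) {A B : Finset V}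
    (hAB : Disjoint A B) :
    dirichletEnergy w (cutFun A B) = 4 * eW w A B + eW w (A ∪ B) (A ∪ B)ᶜ := by
  have hsplit : ∀ i j, w i j * (cutFun A B i - cutFun A B j) ^ 2 =
      4 * (if i ∈ A ∧ j ∈ B then w i j else 0) + 4 * (if i ∈ B ∧ j ∈ A then w i j else 0) +
        (if i ∈ A ∪ B ∧ j ∈ (A ∪ B)ᶜ then w i j else 0) +
        (if i ∈ (A ∪ B)ᶜ ∧ j ∈ A ∪ B then w i j else 0) := fun i j => by
    have hi : i ∈ A → i ∉ B := fun h => Finset.disjoint_left.1 hAB h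
    have hj : j ∈ A → j ∉ B := fun h => Finset.disjoint_left.1 hAB h
    simp only [cutFun, Finset.mem_union, Finset.mem_compl]
    grind
  calc dirichletEnergy w (cutFun A B)
      = (4 * eW w A B + 4 * eW w B A + eW w (A ∪ B) (A ∪ B)ᶜ + eW w (A ∪ B)ᶜ (A ∪ B)) / 2 := by
        simp only [dirichletEnergy, hsplit, Finset.sum_add_distrib, ← Finset.mul_sum,
          ← eW_eq_sum_ite]
    _ = 4 * eW w A B + eW w (A ∪ B) (A ∪ B)ᶜ := by
        rw [eW_comm hsym B A, eW_comm hsym (A ∪ B)ᶜ]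
        ring

theorem exists_isEigen_cut_div_vol_le {w : V → V → ℝ} (hsym : ∀ i j, w i j = w j i)
    (hdeg : ∀ i, 0 < deg w i) {A B : Finset V} (hne : (A ∪ B).Nonempty) (hAB : Disjoint A B) :
    ∃ μ, IsEigen w μ ∧
      (4 * eW w A B + eW w (A ∪ B) (A ∪ B)ᶜ) / vol w (A ∪ B) ≤ μ := by
  have : Nonempty V := hne.to_type
  obtain ⟨μ, hμ, hle⟩ := exists_isEigen_forall_dirichletEnergy_le hsym hdeg
  refine ⟨μ, hμ, (div_le_iff₀ (vol_pos hdeg hne)).2 ?_⟩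
  rw [← dirichletEnergy_cutFun hsym hAB, ← sum_deg_mul_cutFun_sq]
  exact hle _

end CutFunction

section Cheeger

theorem eW_compl_div_vol_nonneg {w : V → V → ℝ} (hnn : ∀ i j, 0 ≤ w i j) (U : Finset V) :
    0 ≤ eW w U Uᶜ / vol w U :=
  div_nonneg (eW_nonneg hnn _ _) (vol_nonneg hnn _)

theorem cheeger_nonneg {w : V → V → ℝ} (hnn : ∀ i j, 0 ≤ w i j) : 0 ≤ cheeger w := by
  refine Real.sInf_nonneg ?_
  rintro _ ⟨U, -, -, -, rfl⟩
  exact eW_compl_div_vol_nonneg hnn U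

theorem cheeger_le_of_vol_le_vol_compl {w : V → V → ℝ} (hnn : ∀ i j, 0 ≤ w i j) {U : Finset V}
    (hpos : 0 < vol w U) (hU : vol w U ≤ vol w Uᶜ) :
    cheeger w ≤ eW w U Uᶜ / vol w U := by
  have hnonempty : U.Nonempty := Finset.nonempty_of_sum_ne_zero hpos.ne'
  have hne_univ : U ≠ univ := by
    rintro rfl
    rw [Finset.compl_univ] at hU
    exact (hpos.trans_le hU).ne' Finset.sum_empty
  have hhalf : vol w U ≤ vol w univ / 2 := by linarith [vol_add_vol_compl w U]
  refine csInf_le ⟨0, ?_⟩ ⟨U, hnonempty, hne_univ, hhalf, rfl⟩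
  rintro _ ⟨U', -, -, -, rfl⟩
  exact eW_compl_div_vol_nonneg hnn U'

end Cheeger

theorem largest_eigenvalue_ge_dualCheeger_add_cheeger_general {w : V → V → ℝ}
    (hsym : ∀ i j, w i j = w j i) (hnn : ∀ i j, 0 ≤ w i j) (hdeg : ∀ i, 0 < deg w i)
    {V1 V2 : Finset V} (hne : (V1 ∪ V2).Nonempty) (hdisj : Disjoint V1 V2)
    (hvol : vol w (V1 ∪ V2) ≤ vol w (V1 ∪ V2)ᶜ) :
    ∃ μ, IsEigen w μ ∧ 2 * (2 * eW w V1 V2 / (vol w V1 + vol w V2)) + cheeger w ≤ μ := by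
  obtain ⟨μ, hμ, hcut⟩ := exists_isEigen_cut_div_vol_le hsym hdeg hne hdisj
  refine ⟨μ, hμ, ?_⟩
  calc 2 * (2 * eW w V1 V2 / (vol w V1 + vol w V2)) + cheeger w
      = 2 * (2 * eW w V1 V2 / vol w (V1 ∪ V2)) + cheeger w := by rw [vol_union hdisj]
    _ ≤ 2 * (2 * eW w V1 V2 / vol w (V1 ∪ V2)) +
          eW w (V1 ∪ V2) (V1 ∪ V2)ᶜ / vol w (V1 ∪ V2) := by
        gcongr
        exact cheeger_le_of_vol_le_vol_compl hnn (vol_pos hdeg hne) hvol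
    _ = (4 * eW w V1 V2 + eW w (V1 ∪ V2) (V1 ∪ V2)ᶜ) / vol w (V1 ∪ V2) := by ring
    _ ≤ μ := hcut

/-- Corollary: improved lower bound for the largest eigenvalue.
If `V₁, V₂, V₃` is a partition achieving the dual Cheeger constant and
`vol(V₁ ∪ V₂) ≤ vol(V₃)`, then
`λ_{N-1} ≥ 2 h̄ + R(V₁,V₂) h` where `R(V₁,V₂) = min(vol V₁, vol V₂)/max(vol V₁, vol V₂)`. -/
theorem largest_eigenvalue_ge_dualCheeger_add_cheeger
    (w : V → V → ℝ)
    (hsym : ∀ i j, w i j = w j i) (hnn : ∀ i j, 0 ≤ w i j)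
    (hdeg : ∀ i, 0 < deg w i) (hconn : Conn w) (hN : 2 ≤ Fintype.card V)
    (V1 V2 : Finset V) (hV1 : V1.Nonempty) (hV2 : V2.Nonempty) (hdisj : Disjoint V1 V2)
    (hach : dualCheeger w = 2 * eW w V1 V2 / (vol w V1 + vol w V2))
    (hvol : vol w (V1 ∪ V2) ≤ vol w (V1 ∪ V2)ᶜ)
    (lam : ℝ) (hlam : IsEigen w lam) (hmax : ∀ μ, IsEigen w μ → μ ≤ lam) :
    2 * dualCheeger w +
        (min (vol w V1) (vol w V2) / max (vol w V1) (vol w V2)) * cheeger w ≤ lam := by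
  obtain ⟨μ, hμ, hle⟩ := largest_eigenvalue_ge_dualCheeger_add_cheeger_general hsym hnn hdeg
    (hV1.mono Finset.subset_union_left) hdisj hvol
  have hratio : min (vol w V1) (vol w V2) / max (vol w V1) (vol w V2) ≤ 1 :=
    div_le_one_of_le₀ min_le_max (le_max_of_le_left (vol_nonneg hnn V1))
  rw [hach]
  linarith [hmax μ hμ, mul_le_of_le_one_left (cheeger_nonneg hnn) hratio]

end BJ
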